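/- Fix β > 0 and K > 0 and suppose that z = 0 is the unique global minimum point of G_{β,K} over ℝ and that G_{β,K}''(0) > 0. Then, as n → ∞, the distributions of S_n/n^{1/2} under the canonical ensembles P_{n,β,K} converge weakly to the centered normal distribution N(0, σ²) with variance σ² = 2βK c_β''(0) / G_{β,K}''(0). -/

import Mathlib

noncomputable section

open scoped BigOperators

/-- `c_β(t) = log[(1 + e^{−β}(e^t + e^{−t}))/(1 + 2e^{−β})]`. -/
def cBeta (β t : ℝ) : ℝ :=
  Real.log ((1 + Real.exp (-β) * (Real.exp t + Real.exp (-t))) / (1 + 2 * Real.exp (-β)))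

/-- `G_{β,K}(z) = βK z² − c_β(2βK z)`. -/
def Gfun (β K z : ℝ) : ℝ := β * K * z ^ 2 - cBeta β (2 * β * K * z)

/-- The spin space `Λ = {-1, 0, 1} ⊆ ℤ`. -/
abbrev Spin : Type := ({-1, 0, 1} : Finset ℤ)

/-- The total spin `S_n(ω) = Σ_j ω_j` (as a real number). -/
def totalSpin (n : ℕ) (ω : Fin n → Spin) : ℝ := ∑ j, ((ω j : ℤ) : ℝ)

/-- The energy `H_{n,K}(ω) = Σ_j ω_j² − (K/n)(Σ_j ω_j)²`. -/
def ham (K : ℝ) (n : ℕ) (ω : Fin n → Spin) : ℝ :=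
  (∑ j, ((ω j : ℤ) : ℝ) ^ 2) - (K / n) * (∑ j, ((ω j : ℤ) : ℝ)) ^ 2

/-- The canonical ensemble `P_{n,β,K}`: the probability mass of a configuration
`ω ∈ Λⁿ` is proportional to `exp(−β H_{n,K}(ω))`. -/
def canonP (β K : ℝ) (n : ℕ) (ω : Fin n → Spin) : ℝ :=
  Real.exp (-β * ham K n ω) / ∑ ω' : Fin n → Spin, Real.exp (-β * ham K n ω')

/-- The single-spin parameter `p = 2e^{-β}/(1+2e^{-β})`. -/
def pB (β : ℝ) : ℝ := 2 * Real.exp (-β) / (1 + 2 * Real.exp (-β))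

lemma pB_pos (β : ℝ) : 0 < pB β := by unfold pB; positivity

lemma pB_lt_one (β : ℝ) : pB β < 1 := by
  unfold pB
  rw [div_lt_one (by positivity)]
  linarith

lemma cBeta_eq (β t : ℝ) : cBeta β t = Real.log (1 + pB β * (Real.cosh t - 1)) := by
  unfold cBeta pB
  congr 1
  rw [Real.cosh_eq]
  field_simp
  ring

lemma q_ge_one (β t : ℝ) : 1 ≤ 1 + pB β * (Real.cosh t - 1) := by
  have := mul_nonneg (pB_pos β).le (sub_nonneg.2 (Real.one_le_cosh t))
  linarith

lemma iter_generic (β a s b : ℝ) :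
    iteratedDeriv 2 (fun z => a * z ^ 2 + s * Real.log (1 + pB β * (Real.cosh (b * z) - 1))) 0
      = 2 * a + s * pB β * b ^ 2 := by
  have hlin : ∀ z, HasDerivAt (fun z : ℝ => b * z) b z := fun z => by
    simpa using (hasDerivAt_id z).const_mul b
  have hq : ∀ z, HasDerivAt (fun z => 1 + pB β * (Real.cosh (b * z) - 1))
      (pB β * (Real.sinh (b * z) * b)) z := fun z =>
    ((((hlin z).cosh).sub_const 1).const_mul (pB β)).const_add 1
  have h1 : deriv (fun z => a * z ^ 2 + s * Real.log (1 + pB β * (Real.cosh (b * z) - 1)))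
      = fun z => a * (2 * z) + s * (pB β * (Real.sinh (b * z) * b) /
          (1 + pB β * (Real.cosh (b * z) - 1))) := by
    funext z
    have hne : 1 + pB β * (Real.cosh (b * z) - 1) ≠ 0 := by
      have := q_ge_one β (b * z); linarith
    have hsq : HasDerivAt (fun z : ℝ => z ^ 2) (2 * z) z := by
      simpa using hasDerivAt_pow 2 z
    exact ((hsq.const_mul a).add (((hq z).log hne).const_mul s)).deriv
  rw [iteratedDeriv_succ, iteratedDeriv_one, h1]
  have hne : 1 + pB β * (Real.cosh (b * 0) - 1) ≠ 0 := by
    have := q_ge_one β (b * 0); linarith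
  have h2 := (((hasDerivAt_id (0 : ℝ)).const_mul 2).const_mul a).add
    (((((((hlin 0).sinh).mul_const b).const_mul (pB β))).div (hq 0) hne).const_mul s)
  refine h2.deriv.trans ?_
  simp
  ring

lemma iter_c (β : ℝ) : iteratedDeriv 2 (cBeta β) 0 = pB β := by
  have := iter_generic β 0 1 1
  rw [show cBeta β = fun z => 0 * z ^ 2 + 1 * Real.log (1 + pB β * (Real.cosh (1 * z) - 1)) by
    funext z; rw [cBeta_eq]; simp, this]
  ring

lemma iter_G (β K : ℝ) : iteratedDeriv 2 (Gfun β K) 0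
    = 2 * (β * K) - pB β * (2 * β * K) ^ 2 := by
  have := iter_generic β (β * K) (-1) (2 * β * K)
  rw [show Gfun β K = fun z => β * K * z ^ 2 +
    (-1) * Real.log (1 + pB β * (Real.cosh (2 * β * K * z) - 1)) by
    funext z; unfold Gfun; rw [cBeta_eq]; ring, this]
  ring

lemma cont_G (β K : ℝ) : Continuous (Gfun β K) := by
  rw [show Gfun β K = fun z => β * K * z ^ 2 -
    Real.log (1 + pB β * (Real.cosh (2 * β * K * z) - 1)) by
    funext z; unfold Gfun; rw [cBeta_eq]]
  refine Continuous.sub (by fun_prop) (Continuous.log (by fun_prop) fun z => ?_)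
  have := q_ge_one β (2 * β * K * z); linarith

lemma G_zero (β K : ℝ) : Gfun β K 0 = 0 := by
  unfold Gfun; rw [cBeta_eq]; simp

/-- `cosh u - 1 ≤ (1/2+ε) u²` near zero. -/
lemma cosh_near (c : ℝ) (hc : 1 / 2 < c) :
    ∀ᶠ u in nhds (0 : ℝ), Real.cosh u - 1 ≤ c * u ^ 2 := by
  have h : Filter.Tendsto (fun u : ℝ => Real.exp (u ^ 2 / 2)) (nhds 0) (nhds 1) := by
    have : Continuous (fun u : ℝ => Real.exp (u ^ 2 / 2)) := by fun_prop
    simpa using this.tendsto 0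
  have h2 : ∀ᶠ u in nhds (0 : ℝ), Real.exp (u ^ 2 / 2) < 2 * c :=
    h.eventually (gt_mem_nhds (by linarith))
  filter_upwards [h2] with u hu
  have h3 := Real.cosh_le_exp_half_sq u
  -- e^v - 1 ≤ v e^v
  have h4 := Real.one_sub_le_exp_neg (u ^ 2 / 2)
  have h5 : Real.exp (u ^ 2 / 2) * Real.exp (-(u ^ 2 / 2)) = 1 := by
    rw [← Real.exp_add]; simp
  have h6 := Real.exp_pos (u ^ 2 / 2)
  nlinarith [mul_le_mul_of_nonneg_left h4 h6.le, mul_le_mul_of_nonneg_right hu.le (sq_nonneg u)]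

lemma c_le_abs (β t : ℝ) : cBeta β t ≤ |t| := by
  rw [cBeta_eq, Real.log_le_iff_le_exp (by have := q_ge_one β t; linarith)]
  have h1 : Real.cosh t ≤ Real.exp |t| := by
    rw [← Real.cosh_abs, Real.cosh_eq]
    have := Real.exp_le_exp.2 (show -|t| ≤ |t| by have := abs_nonneg t; linarith)
    linarith
  have h2 := Real.one_le_cosh t
  nlinarith [pB_pos β, pB_lt_one β]

lemma G_lower (β K : ℝ) (hβ : 0 < β) (hK : 0 < K)
    (hmin0 : IsMinOn (Gfun β K) Set.univ 0)
    (huniq : ∀ z : ℝ, IsMinOn (Gfun β K) Set.univ z → z = 0)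
    (hG : 0 < iteratedDeriv 2 (Gfun β K) 0) :
    ∃ δ > 0, ∀ z, δ * z ^ 2 ≤ Gfun β K z := by
  have hpos : ∀ z, z ≠ 0 → 0 < Gfun β K z := by
    intro z hz
    by_contra hcon
    push Not at hcon
    apply hz
    apply huniq
    intro y _
    have := hmin0 (Set.mem_univ y)
    simp only [Set.mem_ofPred_eq, G_zero] at this ⊢
    linarith
  rw [iter_G] at hG
  set a := β * K with ha
  have ha0 : 0 < a := mul_pos hβ hK
  have hb : 2 * β * K = 2 * a := by rw [ha]; ring
  rw [hb] at hG
  have hp := pB_pos β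
  have hpa : pB β * (2 * a) < 1 := by
    by_contra hh
    push Not at hh
    nlinarith
  -- near zero
  obtain ⟨c, hc1, hc2⟩ : ∃ c, 1 / 2 < c ∧ pB β * (2 * a) * (2 * c) < 1 := by
    have hne : 0 < pB β * (2 * a) := by positivity
    refine ⟨(1 + (pB β * (2 * a))⁻¹) / 4, ?_, ?_⟩
    · have := (one_lt_inv₀ hne).2 hpa
      linarith
    · have : pB β * (2 * a) * (pB β * (2 * a))⁻¹ = 1 := mul_inv_cancel₀ hne.ne'
      nlinarith
  have hnear := cosh_near c hc1
  obtain ⟨r, hr, hr2⟩ := Metric.eventually_nhds_iff.1 hnear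
  have near : ∀ z, |2 * a * z| < r → a * (1 - pB β * (2 * a) * (2 * c)) * z ^ 2 ≤ Gfun β K z := by
    intro z hz
    have h1 := hr2 (y := 2 * a * z) (by simpa [Real.dist_eq] using hz)
    unfold Gfun
    rw [cBeta_eq, hb, ← ha]
    have h2 := Real.log_le_sub_one_of_pos
      (show 0 < 1 + pB β * (Real.cosh (2 * a * z) - 1) by
        have := q_ge_one β (2 * a * z); linarith)
    have h3 := mul_le_mul_of_nonneg_left h1 hp.le
    nlinarith
  have far : ∀ z, 4 ≤ |z| → a / 2 * z ^ 2 ≤ Gfun β K z := by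
    intro z hz
    have h1 := c_le_abs β (2 * β * K * z)
    rw [hb, abs_mul, abs_of_pos (show 0 < 2 * a by positivity)] at h1
    unfold Gfun
    rw [hb, ← ha]
    rw [← sq_abs z]
    nlinarith [mul_le_mul_of_nonneg_left hz (mul_nonneg ha0.le (abs_nonneg z))]
  -- middle
  have mid : ∃ δ > 0, ∀ z, r / (2 * a) ≤ |z| → |z| ≤ 4 → δ * z ^ 2 ≤ Gfun β K z := by
    set S : Set ℝ := {z | r / (2 * a) ≤ |z|} ∩ Metric.closedBall 0 4 with hS
    have hScpt : IsCompact S := by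
      refine IsCompact.inter_left (isCompact_closedBall 0 4) ?_
      exact isClosed_le continuous_const continuous_abs
    have hmem : ∀ z, z ∈ S ↔ (r / (2 * a) ≤ |z| ∧ |z| ≤ 4) := by
      intro z; simp [hS, Real.dist_eq]
    rcases S.eq_empty_or_nonempty with he | hne
    · refine ⟨1, one_pos, fun z h1 h2 => ?_⟩
      have : z ∈ S := (hmem z).2 ⟨h1, h2⟩
      simp [he] at this
    · obtain ⟨z0, hz0, hz0m⟩ := hScpt.exists_isMinOn hne (cont_G β K).continuousOn
      have hz0ne : z0 ≠ 0 := by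
        rintro rfl
        have := ((hmem 0).1 hz0).1
        have h3 : 0 < r / (2 * a) := by positivity
        simp at this
        linarith
      have hm := hpos z0 hz0ne
      refine ⟨Gfun β K z0 / 16, by positivity, fun z h1 h2 => ?_⟩
      have h4 : Gfun β K z0 ≤ Gfun β K z := hz0m ((hmem z).2 ⟨h1, h2⟩)
      have h5 : z ^ 2 ≤ 16 := by
        rw [← sq_abs]; nlinarith [abs_nonneg z]
      nlinarith
  obtain ⟨δ, hδ, hmid⟩ := mid
  set δ1 := a * (1 - pB β * (2 * a) * (2 * c)) with hδ1
  have hδ1p : 0 < δ1 := mul_pos ha0 (by linarith)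
  refine ⟨min δ (min δ1 (a / 2)), by positivity, fun z => ?_⟩
  have key : ∀ d, min δ (min δ1 (a / 2)) ≤ d → d * z ^ 2 ≤ Gfun β K z →
      min δ (min δ1 (a / 2)) * z ^ 2 ≤ Gfun β K z := fun d h1 h2 =>
    (mul_le_mul_of_nonneg_right h1 (sq_nonneg z)).trans h2
  by_cases h4 : 4 ≤ |z|
  · exact key (a / 2) ((min_le_right _ _).trans (min_le_right _ _)) (far z h4)
  · by_cases h5 : r / (2 * a) ≤ |z|
    · exact key δ (min_le_left _ _) (hmid z h5 (by linarith))
    · refine key δ1 ((min_le_right _ _).trans (min_le_left _ _)) (near z ?_)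
      rw [abs_mul, abs_of_pos (show 0 < 2 * a by positivity)]
      push Not at h5
      rw [lt_div_iff₀ (by positivity)] at h5
      linarith

lemma sqrt_mul_sinh (u : ℂ) :
    Filter.Tendsto (fun n : ℕ => ((Real.sqrt n : ℝ) : ℂ) * Complex.sinh (u / (Real.sqrt n : ℝ)))
      Filter.atTop (nhds u) := by
  have hd : HasDerivAt (fun s : ℝ => Complex.sinh (u * s)) u 0 := by
    have h1 : HasDerivAt (fun s : ℂ => Complex.sinh (u * s)) u ((0 : ℝ) : ℂ) := by
      have := ((hasDerivAt_id (0 : ℂ)).const_mul u).csinh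
      simpa using this
    exact h1.comp_ofReal
  have h2 := hd.tendsto_slope_zero_right
  have h3 : Filter.Tendsto (fun n : ℕ => (Real.sqrt n)⁻¹) Filter.atTop (nhdsWithin 0 (Set.Ioi 0)) :=
    tendsto_inv_atTop_nhdsGT_zero.comp
      (Real.tendsto_sqrt_atTop.comp tendsto_natCast_atTop_atTop)
  refine (h2.comp h3).congr fun n => ?_
  simp [div_eq_mul_inv]

lemma pow_limit (p : ℝ) (w : ℂ) :
    Filter.Tendsto (fun n : ℕ => (1 + (p : ℂ) * (Complex.cosh (w / (Real.sqrt n : ℝ)) - 1)) ^ n)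
      Filter.atTop (nhds (Complex.exp (p * w ^ 2 / 2))) := by
  apply Complex.tendsto_one_add_pow_exp_of_tendsto
  have h := ((sqrt_mul_sinh (w / 2)).pow 2).const_mul (2 * (p : ℂ))
  rw [show 2 * (p : ℂ) * (w / 2) ^ 2 = p * w ^ 2 / 2 by ring] at h
  refine h.congr fun n => ?_
  have h1 : Complex.cosh (w / (Real.sqrt n : ℝ)) - 1
      = 2 * Complex.sinh (w / 2 / (Real.sqrt n : ℝ)) ^ 2 := by
    have := Complex.cosh_two_mul (w / 2 / (Real.sqrt n : ℝ))
    have h4 := Complex.cosh_sq (w / 2 / (Real.sqrt n : ℝ))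
    rw [show 2 * (w / 2 / ((Real.sqrt n : ℝ) : ℂ)) = w / (Real.sqrt n : ℝ) by ring] at this
    rw [this, h4]; ring
  have h2 : ((Real.sqrt n : ℝ) : ℂ) ^ 2 = n := by
    norm_cast
    exact Real.sq_sqrt (Nat.cast_nonneg n)
  rw [h1, mul_pow, h2]
  ring

/-- The modulus bound. -/
lemma norm_q_le (β : ℝ) (w : ℂ) :
    ‖1 + (pB β : ℂ) * (Complex.cosh w - 1)‖ ≤ 1 + pB β * (Real.cosh w.re - 1) := by
  have hp := pB_pos β
  have hp1 := pB_lt_one β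
  have h1 : ‖Complex.cosh w‖ ≤ Real.cosh w.re := by
    rw [Complex.cosh, Real.cosh_eq, norm_div]
    have := norm_add_le (Complex.exp w) (Complex.exp (-w))
    rw [Complex.norm_exp, Complex.norm_exp, Complex.neg_re] at this
    simp only [Complex.norm_ofNat]
    linarith
  have h2 : 1 + (pB β : ℂ) * (Complex.cosh w - 1)
      = ((1 - pB β : ℝ) : ℂ) + (pB β : ℂ) * Complex.cosh w := by push_cast; ring
  rw [h2]
  refine (norm_add_le _ _).trans ?_
  rw [norm_mul, Complex.norm_real, Complex.norm_real, Real.norm_of_nonneg hp.le,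
    Real.norm_of_nonneg (by linarith)]
  nlinarith

/-- The integrand appearing after the Hubbard-Stratonovich transformation. -/
def hs (β K t : ℝ) (n : ℕ) (x : ℝ) : ℂ :=
  Complex.exp (-(β * K : ℝ) * x ^ 2) *
    (1 + (pB β : ℂ) * (Complex.cosh ((((2 * β * K * x : ℝ) : ℂ) + t * Complex.I)
      / (Real.sqrt n : ℝ)) - 1)) ^ n

lemma hs_bound (β K δ t : ℝ) (hδ : ∀ z, δ * z ^ 2 ≤ Gfun β K z) (n : ℕ) (hn : n ≠ 0) (x : ℝ) :
    ‖hs β K t n x‖ ≤ Real.exp (-δ * x ^ 2) := by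
  have hs0 : Real.sqrt n ≠ 0 := by
    rw [Real.sqrt_ne_zero (by positivity)]; exact_mod_cast hn
  unfold hs
  rw [norm_mul, norm_pow, Complex.norm_exp]
  have h0 := norm_q_le β ((((2 * β * K * x : ℝ) : ℂ) + t * Complex.I) / (Real.sqrt n : ℝ))
  have hre : ((((2 * β * K * x : ℝ) : ℂ) + t * Complex.I) / (Real.sqrt n : ℝ)).re
      = 2 * β * K * (x / Real.sqrt n) := by
    rw [Complex.div_ofReal_re]
    simp
    ring
  rw [hre] at h0
  have h1 : 1 + pB β * (Real.cosh (2 * β * K * (x / Real.sqrt n)) - 1)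
      = Real.exp (cBeta β (2 * β * K * (x / Real.sqrt n))) := by
    rw [cBeta_eq, Real.exp_log]
    have := q_ge_one β (2 * β * K * (x / Real.sqrt n)); linarith
  rw [h1] at h0
  have h2 := pow_le_pow_left₀ (norm_nonneg _) h0 n
  refine (mul_le_mul_of_nonneg_left h2 (Real.exp_nonneg _)).trans ?_
  rw [← Real.exp_nat_mul, ← Real.exp_add, Real.exp_le_exp]
  have h3 := hδ (x / Real.sqrt n)
  unfold Gfun at h3
  have h4 : (x / Real.sqrt n) ^ 2 * n = x ^ 2 := by
    rw [div_pow, Real.sq_sqrt (Nat.cast_nonneg n)]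
    field_simp
  have h5 := mul_le_mul_of_nonneg_right h3 (Nat.cast_nonneg (α := ℝ) n)
  have h6 : (-((β * K : ℝ) : ℂ) * (x : ℂ) ^ 2).re = -(β * K) * x ^ 2 := by
    norm_cast
  rw [h6]
  have h7 : δ * (x / Real.sqrt n) ^ 2 * n = δ * x ^ 2 := by rw [mul_assoc, h4]
  have h8 : β * K * (x / Real.sqrt n) ^ 2 * n = β * K * x ^ 2 := by rw [mul_assoc, h4]
  nlinarith

lemma hs_tendsto (β K δ t : ℝ) (hδ0 : 0 < δ) (hδ : ∀ z, δ * z ^ 2 ≤ Gfun β K z) :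
    Filter.Tendsto (fun n : ℕ => ∫ x, hs β K t n x) Filter.atTop
      (nhds (∫ x : ℝ, Complex.exp (-(β * K : ℝ) * x ^ 2) *
        Complex.exp (pB β * (((2 * β * K * x : ℝ) : ℂ) + t * Complex.I) ^ 2 / 2))) := by
  apply MeasureTheory.tendsto_integral_filter_of_dominated_convergence
    (fun x => Real.exp (-δ * x ^ 2))
  · refine Filter.Eventually.of_forall fun n => Continuous.aestronglyMeasurable ?_
    unfold hs
    have : Continuous Complex.cosh := Complex.continuous_cosh
    fun_prop
  · filter_upwards [Filter.eventually_ne_atTop 0] with n hn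
    exact Filter.Eventually.of_forall fun x => hs_bound β K δ t hδ n hn x
  · exact integrable_exp_neg_mul_sq hδ0
  · refine Filter.Eventually.of_forall fun x => ?_
    exact (pow_limit (pB β) _).const_mul _

lemma limit_integral (β K t A : ℝ) (hA : A = 2 * (β * K) - pB β * (2 * β * K) ^ 2) (hA0 : 0 < A) :
    (∫ x : ℝ, Complex.exp (-(β * K : ℝ) * x ^ 2) *
        Complex.exp (pB β * (((2 * β * K * x : ℝ) : ℂ) + t * Complex.I) ^ 2 / 2))
    = ((Real.pi : ℂ) / (A / 2 : ℝ)) ^ (1 / 2 : ℂ) *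
      Complex.exp (-(((2 * β * K * pB β / A) * t ^ 2 / 2 : ℝ) : ℂ)) := by
  have h := integral_cexp_quadratic (b := ((-(A / 2) : ℝ) : ℂ))
    (by rw [Complex.ofReal_re]; linarith)
    ((pB β * (2 * β * K) * t : ℝ) * Complex.I) (-(pB β * t ^ 2 / 2 : ℝ))
  have e : ∀ x : ℝ, Complex.exp (-(β * K : ℝ) * x ^ 2) *
        Complex.exp (pB β * (((2 * β * K * x : ℝ) : ℂ) + t * Complex.I) ^ 2 / 2)
      = Complex.exp (((-(A / 2) : ℝ) : ℂ) * x ^ 2 +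
        ((pB β * (2 * β * K) * t : ℝ) * Complex.I) * x + (-(pB β * t ^ 2 / 2 : ℝ))) := by
    intro x
    rw [← Complex.exp_add]
    congr 1
    rw [hA]
    push_cast
    linear_combination (pB β : ℂ) * t ^ 2 / 2 * Complex.I_sq
  simp_rw [e]
  rw [h]
  have hAc : (A : ℂ) ≠ 0 := by exact_mod_cast hA0.ne'
  congr 2
  · push_cast; ring
  · rw [mul_pow, Complex.I_sq, mul_neg_one]
    norm_cast
    congr 1
    field_simp
    rw [hA]
    ring

lemma sum_spin (g : ℤ → ℂ) : ∑ s : Spin, g s = g (-1) + (g 0 + g 1) := by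
  rw [Finset.sum_coe_sort ({-1, 0, 1} : Finset ℤ) g]
  simp

lemma hs_identity (β K t : ℝ) (hβ : 0 < β) (hK : 0 < K) (n : ℕ) (hn : n ≠ 0) :
    ((Real.pi : ℂ) / (β * K : ℝ)) ^ (1 / 2 : ℂ) *
      ∑ ω : Fin n → Spin, ((Real.exp (-β * ham K n ω) : ℝ) : ℂ) *
        Complex.exp (t * ((totalSpin n ω / Real.sqrt n : ℝ) : ℂ) * Complex.I)
    = ((1 + 2 * Real.exp (-β) : ℝ) : ℂ) ^ n * ∫ x, hs β K t n x := by
  have hbk : 0 < β * K := mul_pos hβ hK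
  have hs0 : Real.sqrt n ≠ 0 := by
    rw [Real.sqrt_ne_zero (by positivity)]; exact_mod_cast hn
  have hs2 : Real.sqrt n ^ 2 = n := Real.sq_sqrt (Nat.cast_nonneg n)
  have hre : (-((β * K : ℝ) : ℂ)).re < 0 := by simpa using hbk
  -- the integrand expanded over configurations
  have key : ∀ x : ℝ, ((1 + 2 * Real.exp (-β) : ℝ) : ℂ) ^ n * hs β K t n x
      = ∑ ω : Fin n → Spin, Complex.exp (-((β * K : ℝ) : ℂ) * x ^ 2
          + ((2 * β * K * (totalSpin n ω / Real.sqrt n) : ℝ) : ℂ) * x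
          + (-((β * ∑ j, ((ω j : ℤ) : ℝ) ^ 2 : ℝ) : ℂ)
            + t * ((totalSpin n ω / Real.sqrt n : ℝ) : ℂ) * Complex.I)) := by
    intro x
    set w : ℂ := (((2 * β * K * x : ℝ) : ℂ) + t * Complex.I) / (Real.sqrt n : ℝ) with hw
    have h1 : ((1 + 2 * Real.exp (-β) : ℝ) : ℂ) * (1 + (pB β : ℂ) * (Complex.cosh w - 1))
        = ∑ s : Spin, (fun k : ℤ => Complex.exp (-(β : ℂ) * k ^ 2 + w * k)) s := by
      rw [sum_spin (fun k : ℤ => Complex.exp (-(β : ℂ) * k ^ 2 + w * k))]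
      have hM : ((1 + 2 * Real.exp (-β) : ℝ) : ℂ) * (pB β : ℂ) = 2 * Complex.exp (-β) := by
        have : (1 + 2 * Real.exp (-β)) * pB β = 2 * Real.exp (-β) := by
          unfold pB; field_simp
        rw [← Complex.ofReal_mul, this]; push_cast; rfl
      rw [mul_add, ← mul_assoc, hM, Complex.cosh]
      simp only [Int.cast_neg, Int.cast_one, Int.cast_zero]
      rw [Complex.exp_add, Complex.exp_add (-(β : ℂ) * 1 ^ 2)]
      simp
      ring
    unfold hs
    rw [← hw, mul_left_comm, ← mul_pow, h1]
    rw [Finset.sum_pow', Finset.mul_sum, Fintype.piFinset_univ]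
    refine Finset.sum_congr rfl fun ω _ => ?_
    rw [← Complex.exp_sum, ← Complex.exp_add]
    congr 1
    rw [Finset.sum_add_distrib, ← Finset.mul_sum, ← Finset.mul_sum, hw]
    unfold totalSpin
    push_cast
    ring
  rw [← MeasureTheory.integral_const_mul]
  simp_rw [key]
  rw [MeasureTheory.integral_finsetSum]
  · rw [Finset.mul_sum]
    refine Finset.sum_congr rfl fun ω _ => ?_
    rw [integral_cexp_quadratic hre, neg_neg]
    congr 1
    rw [Complex.ofReal_exp, ← Complex.exp_add]
    congr 1
    have h5 : -β * ham K n ω = -(β * ∑ j, ((ω j : ℤ) : ℝ) ^ 2) -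
        (2 * β * K * (totalSpin n ω / Real.sqrt n)) ^ 2 / (4 * (-(β * K))) := by
      unfold ham
      change -β * (_ - K / n * (totalSpin n ω) ^ 2) = _
      rw [mul_pow, div_pow, hs2]
      field_simp
      ring
    rw [h5]
    push_cast
    ring
  · intro ω _
    exact integrable_cexp_quadratic' hre _ _

/-- The law of `S_n/√n` under the canonical ensemble. -/
def lawM (β K : ℝ) (n : ℕ) : MeasureTheory.Measure ℝ :=
  ∑ ω : Fin n → Spin, ENNReal.ofReal (canonP β K n ω) •
    MeasureTheory.Measure.dirac (totalSpin n ω / Real.sqrt n)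

instance : Nonempty Spin := ⟨⟨0, by simp⟩⟩

lemma Z_pos (β K : ℝ) (n : ℕ) : 0 < ∑ ω' : Fin n → Spin, Real.exp (-β * ham K n ω') :=
  Finset.sum_pos (fun _ _ => Real.exp_pos _) Finset.univ_nonempty

lemma canonP_nonneg (β K : ℝ) (n : ℕ) (ω : Fin n → Spin) : 0 ≤ canonP β K n ω :=
  div_nonneg (Real.exp_pos _).le (Z_pos β K n).le

lemma lawM_integral {E : Type*} [NormedAddCommGroup E] [NormedSpace ℝ E] [CompleteSpace E]
    (β K : ℝ) (n : ℕ) (g : ℝ → E) :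
    ∫ x, g x ∂(lawM β K n) = ∑ ω : Fin n → Spin, canonP β K n ω • g (totalSpin n ω / Real.sqrt n) := by
  unfold lawM
  rw [MeasureTheory.integral_finsetSum_measure]
  · refine Finset.sum_congr rfl fun ω _ => ?_
    rw [MeasureTheory.integral_smul_measure, MeasureTheory.integral_dirac,
      ENNReal.toReal_ofReal (canonP_nonneg β K n ω)]
  · intro ω _
    refine MeasureTheory.Integrable.smul_measure ?_ ENNReal.ofReal_ne_top
    exact MeasureTheory.integrable_dirac (by simp)

instance lawM_prob (β K : ℝ) (n : ℕ) : MeasureTheory.IsProbabilityMeasure (lawM β K n) := by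
  constructor
  unfold lawM
  rw [MeasureTheory.Measure.finsetSum_apply]
  simp only [MeasureTheory.Measure.smul_apply, MeasureTheory.measure_univ, smul_eq_mul, mul_one]
  rw [← ENNReal.ofReal_sum_of_nonneg (fun ω _ => canonP_nonneg β K n ω)]
  unfold canonP
  rw [← Finset.sum_div, div_self (Z_pos β K n).ne', ENNReal.ofReal_one]

lemma charFun_law (β K t : ℝ) (hβ : 0 < β) (hK : 0 < K) (n : ℕ) (hn : n ≠ 0) :
    MeasureTheory.charFun (lawM β K n) t = (∫ x, hs β K t n x) / ∫ x, hs β K 0 n x := by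
  rw [MeasureTheory.charFun_apply_real, lawM_integral]
  have h1 := hs_identity β K t hβ hK n hn
  have h0 := hs_identity β K 0 hβ hK n hn
  simp only [Complex.ofReal_zero, zero_mul, Complex.exp_zero, mul_one] at h0
  have hbk : 0 < β * K := mul_pos hβ hK
  have hC : ((Real.pi : ℂ) / (β * K : ℝ)) ^ (1 / 2 : ℂ) ≠ 0 := by
    rw [Complex.cpow_ne_zero_iff]
    left
    norm_cast
    exact (div_pos Real.pi_pos hbk).ne'
  have hM : ((1 + 2 * Real.exp (-β) : ℝ) : ℂ) ^ n ≠ 0 := by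
    apply pow_ne_zero
    have : (0 : ℝ) < 1 + 2 * Real.exp (-β) := by positivity
    exact_mod_cast this.ne'
  have hZ : (∑ ω : Fin n → Spin, ((Real.exp (-β * ham K n ω) : ℝ) : ℂ)) ≠ 0 := by
    have := (Z_pos β K n).ne'
    exact_mod_cast this
  have hI0 : (∫ x, hs β K 0 n x) ≠ 0 := by
    intro h
    rw [h, mul_zero] at h0
    exact (mul_ne_zero hC hZ) h0
  have e : ∑ ω : Fin n → Spin, canonP β K n ω •
      Complex.exp (t * ((totalSpin n ω / Real.sqrt n : ℝ) : ℂ) * Complex.I)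
      = (∑ ω : Fin n → Spin, ((Real.exp (-β * ham K n ω) : ℝ) : ℂ) *
        Complex.exp (t * ((totalSpin n ω / Real.sqrt n : ℝ) : ℂ) * Complex.I)) /
        (∑ ω : Fin n → Spin, ((Real.exp (-β * ham K n ω) : ℝ) : ℂ)) := by
    rw [Finset.sum_div]
    refine Finset.sum_congr rfl fun ω _ => ?_
    unfold canonP
    rw [Complex.real_smul, Complex.ofReal_div, Complex.ofReal_sum]
    ring
  rw [e, div_eq_div_iff hZ hI0]
  apply mul_left_cancel₀ (mul_ne_zero hC hM)
  linear_combination (((1 + 2 * Real.exp (-β) : ℝ) : ℂ) ^ n * ∫ x, hs β K 0 n x) * h1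
    - (((1 + 2 * Real.exp (-β) : ℝ) : ℂ) ^ n * ∫ x, hs β K t n x) * h0

/-- Suppose `z = 0` is the unique global minimum point of `G_{β,K}`
and `G_{β,K}''(0) > 0`.  Then the distributions of `S_n/n^{1/2}` under `P_{n,β,K}`
converge weakly (tested against bounded continuous functions) to the centered Gaussian
with variance `σ² = 2βK c_β''(0)/G_{β,K}''(0)`. -/
theorem clt_total_spin (β K : ℝ) (hβ : 0 < β) (hK : 0 < K)
    (hmin0 : IsMinOn (Gfun β K) Set.univ 0)
    (huniq : ∀ z : ℝ, IsMinOn (Gfun β K) Set.univ z → z = 0)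
    (hG : 0 < iteratedDeriv 2 (Gfun β K) 0) :
    ∀ f : ℝ → ℝ, Continuous f → (∃ C : ℝ, ∀ x, |f x| ≤ C) →
      Filter.Tendsto (fun n : ℕ =>
          ∑ ω : Fin n → Spin, canonP β K n ω * f (totalSpin n ω / Real.sqrt n))
        Filter.atTop
        (nhds (∫ x, f x ∂(ProbabilityTheory.gaussianReal 0
          (Real.toNNReal (2 * β * K * iteratedDeriv 2 (cBeta β) 0 /
            iteratedDeriv 2 (Gfun β K) 0))))) := by
  intro f hf ⟨C, hC⟩
  obtain ⟨δ, hδ0, hδ⟩ := G_lower β K hβ hK hmin0 huniq hG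
  rw [iter_c]
  set A := iteratedDeriv 2 (Gfun β K) 0 with hAdef
  have hA : A = 2 * (β * K) - pB β * (2 * β * K) ^ 2 := iter_G β K
  have hv : 0 ≤ 2 * β * K * pB β / A := by
    have := pB_pos β
    positivity
  set ν := ProbabilityTheory.gaussianReal 0 (Real.toNNReal (2 * β * K * pB β / A)) with hν
  let μ : ℕ → MeasureTheory.ProbabilityMeasure ℝ := fun n => ⟨lawM β K n, lawM_prob β K n⟩
  let ν' : MeasureTheory.ProbabilityMeasure ℝ := ⟨ν, inferInstance⟩
  have hconv : Filter.Tendsto μ Filter.atTop (nhds ν') := by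
    apply MeasureTheory.ProbabilityMeasure.tendsto_of_tendsto_charFun
    intro t
    change Filter.Tendsto (fun n => MeasureTheory.charFun (lawM β K n) t) Filter.atTop
      (nhds (MeasureTheory.charFun ν t))
    have hpi : ((Real.pi : ℂ) / (A / 2 : ℝ)) ^ (1 / 2 : ℂ) ≠ 0 := by
      rw [Complex.cpow_ne_zero_iff]
      left
      norm_cast
      exact (div_pos Real.pi_pos (by linarith)).ne'
    have ht := hs_tendsto β K δ t hδ0 hδ
    have h0 := hs_tendsto β K δ 0 hδ0 hδ
    rw [limit_integral β K t A hA hG] at ht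
    rw [limit_integral β K 0 A hA hG] at h0
    have hne : ((Real.pi : ℂ) / (A / 2 : ℝ)) ^ (1 / 2 : ℂ) *
      Complex.exp (-(((2 * β * K * pB β / A) * (0 : ℝ) ^ 2 / 2 : ℝ) : ℂ)) ≠ 0 :=
      mul_ne_zero hpi (Complex.exp_ne_zero _)
    have hdiv := ht.div h0 hne
    have hlim : MeasureTheory.charFun ν t = (((Real.pi : ℂ) / (A / 2 : ℝ)) ^ (1 / 2 : ℂ) *
      Complex.exp (-(((2 * β * K * pB β / A) * t ^ 2 / 2 : ℝ) : ℂ))) /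
      (((Real.pi : ℂ) / (A / 2 : ℝ)) ^ (1 / 2 : ℂ) *
      Complex.exp (-(((2 * β * K * pB β / A) * (0 : ℝ) ^ 2 / 2 : ℝ) : ℂ))) := by
      rw [mul_div_mul_left _ _ hpi, hν, ProbabilityTheory.charFun_gaussianReal,
        Real.coe_toNNReal _ hv]
      simp
    rw [hlim]
    refine hdiv.congr' ?_
    filter_upwards [Filter.eventually_ne_atTop 0] with n hn
    exact (charFun_law β K t hβ hK n hn).symm
  rw [MeasureTheory.ProbabilityMeasure.tendsto_iff_forall_integral_tendsto] at hconv
  have := hconv (BoundedContinuousFunction.ofNormedAddCommGroup f hf C hC)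
  refine this.congr fun n => ?_
  change ∫ x, f x ∂(lawM β K n) = _
  rw [lawM_integral]
  simp
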